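/- (Realisation Theorem) Let L be one of IK, IKt, IK4, IS4 and JL the corresponding justification logic JIK, JIKt, JIK4, JIS4. If A is a theorem of L, then there exists a realisation r (a map from intuitionistic modal formulas to justification formulas with (A^r)° = A, where ° is the forgetful projection) such that A^r is a theorem of JL. -/

import Mathlib

namespace JIKPaper

-- Proof terms and satisfiers for intuitionistic justification logic.
mutual
inductive PrfTm : Type
  | pvar : Nat → PrfTm
  | pconst : Nat → PrfTm
  | sum : PrfTm → PrfTm → PrfTm
  | app : PrfTm → PrfTm → PrfTm
  | upd : SatTm → PrfTm → PrfTm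
  | bang : PrfTm → PrfTm
inductive SatTm : Type
  | svar : Nat → SatTm
  | uni : SatTm → SatTm → SatTm
  | prop : PrfTm → SatTm → SatTm
end

/-- Justification formulas. -/
inductive JForm : Type
  | bot : JForm
  | atom : Nat → JForm
  | and : JForm → JForm → JForm
  | or : JForm → JForm → JForm
  | impl : JForm → JForm → JForm
  | jst : PrfTm → JForm → JForm
  | sat : SatTm → JForm → JForm

/-- Intuitionistic modal formulas. -/
inductive MForm : Type
  | bot : MForm
  | atom : Nat → MForm
  | and : MForm → MForm → MForm
  | or : MForm → MForm → MForm
  | impl : MForm → MForm → MForm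
  | box : MForm → MForm
  | dia : MForm → MForm

/-- Axiom instances of the justification logics JIK (false,false), JIKt (true,false),
JIK4 (false,true), JIS4 (true,true): intuitionistic propositional axioms, jk1–jk5,
sum axioms, and optionally the jt and j4 axioms. -/
inductive JAx : Bool → Bool → JForm → Prop
  | ax1 {hT h4 : Bool} {A B : JForm} : JAx hT h4 (A.impl (B.impl A))
  | ax2 {hT h4 : Bool} {A B C : JForm} :
      JAx hT h4 ((A.impl (B.impl C)).impl ((A.impl B).impl (A.impl C)))
  | andI {hT h4 : Bool} {A B : JForm} : JAx hT h4 (A.impl (B.impl (A.and B)))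
  | andE1 {hT h4 : Bool} {A B : JForm} : JAx hT h4 ((A.and B).impl A)
  | andE2 {hT h4 : Bool} {A B : JForm} : JAx hT h4 ((A.and B).impl B)
  | orI1 {hT h4 : Bool} {A B : JForm} : JAx hT h4 (A.impl (A.or B))
  | orI2 {hT h4 : Bool} {A B : JForm} : JAx hT h4 (B.impl (A.or B))
  | orE {hT h4 : Bool} {A B C : JForm} :
      JAx hT h4 ((A.impl C).impl ((B.impl C).impl ((A.or B).impl C)))
  | exf {hT h4 : Bool} {A : JForm} : JAx hT h4 (JForm.bot.impl A)
  | jk1 {hT h4 : Bool} {s t : PrfTm} {A B : JForm} :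
      JAx hT h4 ((JForm.jst s (A.impl B)).impl
        ((JForm.jst t A).impl (JForm.jst (PrfTm.app s t) B)))
  | jk2 {hT h4 : Bool} {s : PrfTm} {μ : SatTm} {A B : JForm} :
      JAx hT h4 ((JForm.jst s (A.impl B)).impl
        ((JForm.sat μ A).impl (JForm.sat (SatTm.prop s μ) B)))
  | jk3 {hT h4 : Bool} {μ : SatTm} {A B : JForm} :
      JAx hT h4 ((JForm.sat μ (A.or B)).impl ((JForm.sat μ A).or (JForm.sat μ B)))
  | jk4 {hT h4 : Bool} {μ : SatTm} {t : PrfTm} {A B : JForm} :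
      JAx hT h4 (((JForm.sat μ A).impl (JForm.jst t B)).impl
        (JForm.jst (PrfTm.upd μ t) (A.impl B)))
  | jk5 {hT h4 : Bool} {μ : SatTm} :
      JAx hT h4 ((JForm.sat μ JForm.bot).impl JForm.bot)
  | sum1 {hT h4 : Bool} {s t : PrfTm} {A : JForm} :
      JAx hT h4 ((JForm.jst s A).impl (JForm.jst (PrfTm.sum s t) A))
  | sum2 {hT h4 : Bool} {s t : PrfTm} {A : JForm} :
      JAx hT h4 ((JForm.jst t A).impl (JForm.jst (PrfTm.sum s t) A))
  | uni1 {hT h4 : Bool} {μ ν : SatTm} {A : JForm} :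
      JAx hT h4 ((JForm.sat μ A).impl (JForm.sat (SatTm.uni μ ν) A))
  | uni2 {hT h4 : Bool} {μ ν : SatTm} {A : JForm} :
      JAx hT h4 ((JForm.sat ν A).impl (JForm.sat (SatTm.uni μ ν) A))
  | jtBox {h4 : Bool} {t : PrfTm} {A : JForm} : JAx true h4 ((JForm.jst t A).impl A)
  | jtDia {h4 : Bool} {μ : SatTm} {A : JForm} : JAx true h4 (A.impl (JForm.sat μ A))
  | j4Box {hT : Bool} {t : PrfTm} {A : JForm} :
      JAx hT true ((JForm.jst t A).impl (JForm.jst (PrfTm.bang t) (JForm.jst t A)))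
  | j4Dia {hT : Bool} {μ ν : SatTm} {A : JForm} :
      JAx hT true ((JForm.sat μ (JForm.sat ν A)).impl (JForm.sat ν A))

/-- `cₙ:⋯:c₁:A` for a list of constants. -/
def canChain (cs : List Nat) (A : JForm) : JForm :=
  cs.foldr (fun c B => JForm.jst (PrfTm.pconst c) B) A

/-- Theorems of the justification logic: closure of the axioms under modus ponens and
the constant axiom necessitation rule (with the empty chain giving the axioms). -/
inductive JThm (hT h4 : Bool) : JForm → Prop
  | can {A : JForm} (cs : List Nat) : JAx hT h4 A → JThm hT h4 (canChain cs A)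
  | mp {A B : JForm} : JThm hT h4 (A.impl B) → JThm hT h4 A → JThm hT h4 B

/-- Axiom instances of IK (false,false), IKt (true,false), IK4 (false,true), IS4 (true,true). -/
inductive MAx : Bool → Bool → MForm → Prop
  | ax1 {hT h4 : Bool} {A B : MForm} : MAx hT h4 (A.impl (B.impl A))
  | ax2 {hT h4 : Bool} {A B C : MForm} :
      MAx hT h4 ((A.impl (B.impl C)).impl ((A.impl B).impl (A.impl C)))
  | andI {hT h4 : Bool} {A B : MForm} : MAx hT h4 (A.impl (B.impl (A.and B)))
  | andE1 {hT h4 : Bool} {A B : MForm} : MAx hT h4 ((A.and B).impl A)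
  | andE2 {hT h4 : Bool} {A B : MForm} : MAx hT h4 ((A.and B).impl B)
  | orI1 {hT h4 : Bool} {A B : MForm} : MAx hT h4 (A.impl (A.or B))
  | orI2 {hT h4 : Bool} {A B : MForm} : MAx hT h4 (B.impl (A.or B))
  | orE {hT h4 : Bool} {A B C : MForm} :
      MAx hT h4 ((A.impl C).impl ((B.impl C).impl ((A.or B).impl C)))
  | exf {hT h4 : Bool} {A : MForm} : MAx hT h4 (MForm.bot.impl A)
  | k1 {hT h4 : Bool} {A B : MForm} :
      MAx hT h4 ((A.impl B).box.impl (A.box.impl B.box))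
  | k2 {hT h4 : Bool} {A B : MForm} :
      MAx hT h4 ((A.impl B).box.impl (A.dia.impl B.dia))
  | k3 {hT h4 : Bool} {A B : MForm} :
      MAx hT h4 ((A.or B).dia.impl (A.dia.or B.dia))
  | k4 {hT h4 : Bool} {A B : MForm} :
      MAx hT h4 ((A.dia.impl B.box).impl (A.impl B).box)
  | k5 {hT h4 : Bool} : MAx hT h4 (MForm.bot.dia.impl MForm.bot)
  | tBox {h4 : Bool} {A : MForm} : MAx true h4 (A.box.impl A)
  | tDia {h4 : Bool} {A : MForm} : MAx true h4 (A.impl A.dia)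
  | fourBox {hT : Bool} {A : MForm} : MAx hT true (A.box.impl A.box.box)
  | fourDia {hT : Bool} {A : MForm} : MAx hT true (A.dia.dia.impl A.dia)

/-- Theorems of the intuitionistic modal logic: modus ponens and necessitation. -/
inductive MThm (hT h4 : Bool) : MForm → Prop
  | ax {A : MForm} : MAx hT h4 A → MThm hT h4 A
  | mp {A B : MForm} : MThm hT h4 (A.impl B) → MThm hT h4 A → MThm hT h4 B
  | nec {A : MForm} : MThm hT h4 A → MThm hT h4 A.box

/-- The forgetful projection from justification formulas to modal formulas. -/
def forget : JForm → MForm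
  | .bot => .bot
  | .atom n => .atom n
  | .and A B => .and (forget A) (forget B)
  | .or A B => .or (forget A) (forget B)
  | .impl A B => .impl (forget A) (forget B)
  | .jst _ A => .box (forget A)
  | .sat _ A => .dia (forget A)

/-!
Call a formula realisable if for every choice of terms at its negative modalities there are terms at
its positive modalities that make it provable. Modus ponens cannot be applied to realisations,
because an implication and its antecedent give the shared formula opposite signs. Instead of
eliminating cuts, we build a Beth model whose points are branches of nested sequents. A succedent is
derivable at a branch if the formula that the branch stands for is realisable, which is preserved by
the rules of a cut-free calculus; contraction is realised by sums of proof terms and unions of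
satisfiers. By simultaneous induction on the formula, assumed formulas are true and true formulas
are derivable. The theorems of the modal logic are true in every Beth model, so they are realisable.
-/

section Development

variable {hT h4 : Bool}

/-! ## Uniform provability -/

/-- Provability of all members of a family of justification formulas by proofs of one common
shape; it is the common shape that lets a single proof term internalise all these proofs. -/
inductive UniformThm (hT h4 : Bool) {ι : Type*} : (ι → JForm) → Prop
  | can {F : ι → JForm} (cs : List Nat) (h : ∀ i, JAx hT h4 (F i)) :
      UniformThm hT h4 (fun i => canChain cs (F i))
  | mp {F G : ι → JForm} :
      UniformThm hT h4 (fun i => (F i).impl (G i)) → UniformThm hT h4 F → UniformThm hT h4 G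

namespace UniformThm

variable {ι κ : Type*} {F G : ι → JForm}

theorem of_ax (h : ∀ i, JAx hT h4 (F i)) : UniformThm hT h4 F :=
  can (F := F) [] h

theorem jThm (h : UniformThm hT h4 F) (i : ι) : JThm hT h4 (F i) := by
  induction h with
  | can cs h => exact .can cs (h i)
  | mp _ _ ihFG ihF => exact .mp ihFG ihF

theorem of_jThm {A : JForm} (h : JThm hT h4 A) : UniformThm hT h4 (fun _ : Unit => A) := by
  induction h with
  | can cs h => exact can (F := fun _ => _) cs fun _ => h
  | mp _ _ ihAB ihA => exact mp ihAB ihA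

theorem reindex (h : UniformThm hT h4 F) (f : κ → ι) : UniformThm hT h4 (fun k => F (f k)) := by
  induction h with
  | @can F cs h => exact can (F := fun k => F (f k)) cs fun k => h (f k)
  | mp _ _ ihFG ihF => exact mp ihFG ihF

theorem lift (h : UniformThm hT h4 F) :
    ∃ c : PrfTm, UniformThm hT h4 (fun i => .jst c (F i)) := by
  induction h with
  | @can F cs h => exact ⟨.pconst 0, can (F := F) (0 :: cs) h⟩
  | mp _ _ ihFG ihF =>
    obtain ⟨c, hc⟩ := ihFG
    obtain ⟨d, hd⟩ := ihF
    exact ⟨.app c d, mp (mp (of_ax fun _ => .jk1) hc) hd⟩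

end UniformThm

/-- Entailment between two families of justification formulas, proved uniformly in the index. -/
def Entails (hT h4 : Bool) {ι : Type*} (F G : ι → JForm) : Prop :=
  UniformThm hT h4 (fun i => (F i).impl (G i))

local infix:50 " ⊢ᵤ " => Entails hT h4

namespace Entails

variable {ι κ : Type*} {F G H K : ι → JForm}

theorem of_ax (h : ∀ i, JAx hT h4 ((F i).impl (G i))) : F ⊢ᵤ G := UniformThm.of_ax h

theorem reindex (h : F ⊢ᵤ G) (f : κ → ι) : (fun k => F (f k)) ⊢ᵤ (fun k => G (f k)) :=
  UniformThm.reindex h f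

theorem of_uniformThm (h : UniformThm hT h4 G) : F ⊢ᵤ G :=
  UniformThm.mp (F := G) (.of_ax fun _ => .ax1) h

theorem mp (h : F ⊢ᵤ (fun i => (G i).impl (H i))) (hG : F ⊢ᵤ G) : F ⊢ᵤ H :=
  UniformThm.mp (UniformThm.mp (.of_ax fun _ => .ax2) h) hG

theorem refl : F ⊢ᵤ F :=
  mp (G := fun i => (F i).impl (F i)) (of_ax fun _ => .ax1) (of_ax fun _ => .ax1)

theorem trans (hFG : F ⊢ᵤ G) (hGH : G ⊢ᵤ H) : F ⊢ᵤ H := mp (of_uniformThm hGH) hFG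

theorem and_left : (fun i => (F i).and (G i)) ⊢ᵤ F := of_ax fun _ => .andE1

theorem and_right : (fun i => (F i).and (G i)) ⊢ᵤ G := of_ax fun _ => .andE2

theorem and_intro (hG : F ⊢ᵤ G) (hH : F ⊢ᵤ H) : F ⊢ᵤ (fun i => (G i).and (H i)) :=
  mp (hG.trans (of_ax fun _ => .andI)) hH

theorem or_inl : F ⊢ᵤ (fun i => (F i).or (G i)) := of_ax fun _ => .orI1

theorem or_inr : G ⊢ᵤ (fun i => (F i).or (G i)) := of_ax fun _ => .orI2

theorem or_elim (hF : F ⊢ᵤ H) (hG : G ⊢ᵤ H) : (fun i => (F i).or (G i)) ⊢ᵤ H :=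
  UniformThm.mp (UniformThm.mp (.of_ax fun _ => .orE) hF) hG

theorem curry (h : (fun i => (F i).and (G i)) ⊢ᵤ H) : F ⊢ᵤ (fun i => (G i).impl (H i)) :=
  have pair : F ⊢ᵤ (fun i => (G i).impl ((F i).and (G i))) := of_ax fun _ => .andI
  pair.trans (UniformThm.mp (.of_ax fun _ => .ax2) (of_uniformThm (F := G) h))

theorem uncurry (h : F ⊢ᵤ (fun i => (G i).impl (H i))) : (fun i => (F i).and (G i)) ⊢ᵤ H :=
  mp (and_left.trans h) and_right

theorem and_map (hFH : F ⊢ᵤ H) (hGK : G ⊢ᵤ K) :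
    (fun i => (F i).and (G i)) ⊢ᵤ (fun i => (H i).and (K i)) :=
  and_intro (and_left.trans hFH) (and_right.trans hGK)

theorem or_map (hFH : F ⊢ᵤ H) (hGK : G ⊢ᵤ K) :
    (fun i => (F i).or (G i)) ⊢ᵤ (fun i => (H i).or (K i)) :=
  or_elim (hFH.trans or_inl) (hGK.trans or_inr)

theorem impl_map (hHF : H ⊢ᵤ F) (hGK : G ⊢ᵤ K) :
    (fun i => (F i).impl (G i)) ⊢ᵤ (fun i => (H i).impl (K i)) :=
  curry ((mp and_left (and_right.trans hHF)).trans hGK)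

theorem and_comm : (fun i => (F i).and (G i)) ⊢ᵤ (fun i => (G i).and (F i)) :=
  and_intro and_right and_left

theorem and_or_elim (hG : (fun i => (F i).and (G i)) ⊢ᵤ K) (hH : (fun i => (F i).and (H i)) ⊢ᵤ K) :
    (fun i => (F i).and ((G i).or (H i))) ⊢ᵤ K :=
  and_comm.trans (uncurry (or_elim (curry (and_comm.trans hG)) (curry (and_comm.trans hH))))

theorem and_and_and_comm :
    (fun i => ((F i).and (G i)).and ((H i).and (K i))) ⊢ᵤ
      (fun i => ((F i).and (H i)).and ((G i).and (K i))) :=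
  and_intro (and_map and_left and_left) (and_map and_right and_right)

theorem or_or_or_comm :
    (fun i => ((F i).or (G i)).or ((H i).or (K i))) ⊢ᵤ
      (fun i => ((F i).or (H i)).or ((G i).or (K i))) :=
  or_elim (or_map or_inl or_inl) (or_map or_inr or_inr)

theorem and_or_and :
    (fun i => ((F i).and (G i)).or ((H i).and (K i))) ⊢ᵤ
      (fun i => ((F i).or (H i)).and ((G i).or (K i))) :=
  and_intro (or_map and_left and_left) (or_map and_right and_right)

theorem and_and_or :
    (fun i => ((F i).and (G i)).and ((H i).or (K i))) ⊢ᵤ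
      (fun i => ((F i).and (H i)).or ((G i).and (K i))) :=
  and_or_elim ((and_map and_left refl).trans or_inl) ((and_map and_right refl).trans or_inr)

theorem or_impl_and :
    (fun i => ((F i).or (G i)).impl ((H i).and (K i))) ⊢ᵤ
      (fun i => ((F i).impl (H i)).and ((G i).impl (K i))) :=
  and_intro (impl_map or_inl and_left) (impl_map or_inr and_right)

theorem impl_or_impl :
    (fun i => ((F i).impl (G i)).or ((H i).impl (K i))) ⊢ᵤ
      (fun i => ((F i).and (H i)).impl ((G i).or (K i))) :=
  or_elim (impl_map and_left or_inl) (impl_map and_right or_inr)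

theorem impl_and_impl_or :
    (fun i => ((F i).impl (G i)).and ((H i).impl (K i))) ⊢ᵤ
      (fun i => ((F i).or (H i)).impl ((G i).or (K i))) :=
  curry (and_or_elim ((mp (and_left.trans and_left) and_right).trans or_inl)
    ((mp (and_left.trans and_right) and_right).trans or_inr))

theorem impl_and_impl_and :
    (fun i => ((F i).impl (G i)).and ((H i).impl (K i))) ⊢ᵤ
      (fun i => ((F i).and (H i)).impl ((G i).and (K i))) :=
  curry (and_intro (mp (and_left.trans and_left) (and_right.trans and_left))
    (mp (and_left.trans and_right) (and_right.trans and_right)))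

theorem impl_impl_of_and_impl :
    (fun i => ((F i).and (G i)).impl (H i)) ⊢ᵤ (fun i => (F i).impl ((G i).impl (H i))) :=
  curry (curry (mp (and_left.trans and_left) (and_map and_right refl)))

theorem and_impl_of_impl_impl :
    (fun i => (F i).impl ((G i).impl (H i))) ⊢ᵤ (fun i => ((F i).and (G i)).impl (H i)) :=
  curry (mp (mp and_left (and_right.trans and_left)) (and_right.trans and_right))

theorem impl_and_and_and {F' : ι → JForm} (h : (fun i => (G i).and (H i)) ⊢ᵤ K) :
    (fun i => ((F i).impl (G i)).and (((F i).and (F' i)).and (H i))) ⊢ᵤ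
      (fun i => (F' i).and (K i)) :=
  have detach : (fun i => ((F i).impl (G i)).and (((F i).and (F' i)).and (H i))) ⊢ᵤ G :=
    mp and_left (and_right.trans (and_left.trans and_left))
  and_intro (and_right.trans (and_left.trans and_right))
    ((and_intro detach (and_right.trans and_right)).trans h)

theorem and_impl_of_and_entails (h : (fun i => (F i).and (G i)) ⊢ᵤ H) :
    (fun i => (F i).and ((H i).impl (K i))) ⊢ᵤ (fun i => (G i).impl (K i)) :=
  curry (mp (and_left.trans and_right) ((and_map and_left refl).trans h))

theorem jst_app {s t : ι → PrfTm} (h : UniformThm hT h4 (fun i => .jst (s i) ((F i).impl (G i)))) :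
    (fun i => .jst (t i) (F i)) ⊢ᵤ (fun i => .jst (.app (s i) (t i)) (G i)) :=
  UniformThm.mp (.of_ax fun _ => .jk1) h

theorem sat_prop {s : ι → PrfTm} {μ : ι → SatTm}
    (h : UniformThm hT h4 (fun i => .jst (s i) ((F i).impl (G i)))) :
    (fun i => .sat (μ i) (F i)) ⊢ᵤ (fun i => .sat (.prop (s i) (μ i)) (G i)) :=
  UniformThm.mp (.of_ax fun _ => .jk2) h

theorem jst_app_of_ax {t : ι → PrfTm} (h : ∀ i, JAx hT h4 ((F i).impl (G i))) :
    (fun i => .jst (t i) (F i)) ⊢ᵤ (fun i => .jst (.app (.pconst 0) (t i)) (G i)) :=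
  jst_app (.can (F := fun i => (F i).impl (G i)) [0] h)

theorem sat_prop_of_ax {μ : ι → SatTm} (h : ∀ i, JAx hT h4 ((F i).impl (G i))) :
    (fun i => .sat (μ i) (F i)) ⊢ᵤ (fun i => .sat (.prop (.pconst 0) (μ i)) (G i)) :=
  sat_prop (.can (F := fun i => (F i).impl (G i)) [0] h)

end Entails

/-! ## Signed realisations -/

/-- Terms for the modalities of a formula that occur in it with sign `s` (`true` is positive). -/
def Choice : (s : Bool) → MForm → Type
  | _, .bot => Unit
  | _, .atom _ => Unit
  | s, .and A B => Choice s A × Choice s B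
  | s, .or A B => Choice s A × Choice s B
  | s, .impl A B => Choice (!s) A × Choice s B
  | true, .box A => PrfTm × Choice true A
  | false, .box A => Choice false A
  | true, .dia A => SatTm × Choice true A
  | false, .dia A => Choice false A

instance Choice.instNonempty (s : Bool) (X : MForm) : Nonempty (Choice s X) := by
  induction X generalizing s with
  | bot | atom => exact ⟨()⟩
  | and A B ihA ihB | or A B ihA ihB => exact (ihA s).elim fun a => (ihB s).elim fun b => ⟨a, b⟩
  | impl A B ihA ihB => exact (ihA !s).elim fun a => (ihB s).elim fun b => ⟨a, b⟩
  | box A ih => cases s with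
    | false => exact ih false
    | true => exact (ih true).elim fun a => ⟨.pconst 0, a⟩
  | dia A ih => cases s with
    | false => exact ih false
    | true => exact (ih true).elim fun a => ⟨.svar 0, a⟩

/-- The realisation of a subformula occurring with sign `b` in the whole formula. The modalities
that are negative in the whole formula are read from `u` (given from outside), those that are
positive from `e` (to be found). -/
def realise : (b : Bool) → (X : MForm) → (u : Choice (!b) X) → (e : Choice b X) → JForm
  | _, .bot, _, _ => .bot
  | _, .atom n, _, _ => .atom n
  | b, .and A B, u, e => .and (realise b A u.1 e.1) (realise b B u.2 e.2)
  | b, .or A B, u, e => .or (realise b A u.1 e.1) (realise b B u.2 e.2)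
  | b, .impl A B, u, e => .impl (realise (!b) A u.1 e.1) (realise b B u.2 e.2)
  | true, .box A, u, e => .jst e.1 (realise true A u e.2)
  | false, .box A, u, e => .jst u.1 (realise false A u.2 e)
  | true, .dia A, u, e => .sat e.1 (realise true A u e.2)
  | false, .dia A, u, e => .sat u.1 (realise false A u.2 e)

theorem forget_realise (b : Bool) (X : MForm) (u : Choice (!b) X) (e : Choice b X) :
    forget (realise b X u e) = X := by
  induction X generalizing b with
  | bot | atom => rfl
  | and A B ihA ihB | or A B ihA ihB | impl A B ihA ihB => simp only [realise, forget, ihA, ihB]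
  | box A ih => cases b <;> exact congrArg MForm.box (ih ..)
  | dia A ih => cases b <;> exact congrArg MForm.dia (ih ..)

theorem forget_surjective : Function.Surjective forget := fun X =>
  ⟨realise true X (Classical.arbitrary _) (Classical.arbitrary _), forget_realise ..⟩

theorem exists_rightInverse_forget_apply_eq (F : JForm) :
    ∃ r : MForm → JForm, Function.RightInverse r forget ∧ r (forget F) = F := by
  classical
  obtain ⟨r, hr⟩ := forget_surjective.hasRightInverse
  refine ⟨Function.update r (forget F) F, fun B => ?_, Function.update_self ..⟩
  by_cases hB : B = forget F
  · rw [hB, Function.update_self]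
  · rw [Function.update_of_ne hB, hr B]

/-! ## Polarised entailment -/

variable (hT h4) in
/-- Uniform entailment from `X` to `Y`, both in negative position. Terms are passed in as in the
functional interpretation: the given terms of `Y` are computed from those of `X`, and the terms
to be found for `X` from the given terms of `X` and those found for `Y`. -/
def NegEntails (X Y : MForm) : Prop :=
  ∃ (f : Choice true X → Choice true Y) (g : Choice true X → Choice false Y → Choice false X),
    (fun p : Choice true X × Choice false Y => realise false X p.1 (g p.1 p.2)) ⊢ᵤ
      (fun p => realise false Y (f p.1) p.2)

variable (hT h4) in
/-- Uniform entailment from `X` to `Y`, both in positive position; the given terms flow from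
`Y` to `X` and the terms found from `X` to `Y`. -/
def PosEntails (X Y : MForm) : Prop :=
  ∃ (f : Choice false Y → Choice false X) (g : Choice false Y → Choice true X → Choice true Y),
    (fun p : Choice false Y × Choice true X => realise true X (f p.1) p.2) ⊢ᵤ
      (fun p => realise true Y p.1 (g p.1 p.2))

variable (hT h4) in
/-- Uniform entailment from `Q` and `P` to `S`, all in positive position, where the given terms
of `P` may depend on the terms found for `Q`. -/
def PosEntails₂ (Q P S : MForm) : Prop :=
  ∃ (f₁ : Choice false S → Choice false Q) (f₂ : Choice false S → Choice true Q → Choice false P)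
    (g : Choice false S → Choice true Q → Choice true P → Choice true S),
    (fun p : Choice false S × Choice true Q × Choice true P =>
      (realise true Q (f₁ p.1) p.2.1).and (realise true P (f₂ p.1 p.2.1) p.2.2)) ⊢ᵤ
      (fun p => realise true S p.1 (g p.1 p.2.1 p.2.2))

variable (hT h4) in
/-- Uniform entailment from `Q`, in positive position, and `E`, in negative position, to `D` in
negative position. -/
def MixedEntails (Q E D : MForm) : Prop :=
  ∃ (f₁ : Choice true E → Choice false Q) (f₂ : Choice true E → Choice true Q → Choice true D)
    (g : Choice true E → Choice true Q → Choice false D → Choice false E),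
    (fun p : Choice true E × Choice true Q × Choice false D =>
      (realise true Q (f₁ p.1) p.2.1).and (realise false E p.1 (g p.1 p.2.1 p.2.2))) ⊢ᵤ
      (fun p => realise false D (f₂ p.1 p.2.1) p.2.2)

local infix:50 " ⊢⁻ " => NegEntails hT h4
local infix:50 " ⊢⁺ " => PosEntails hT h4

section PolarisedEntailment

variable {X Y Z X' Y' P Q S N C D E : MForm}

namespace NegEntails

theorem refl : X ⊢⁻ X := ⟨id, fun _ e => e, .refl⟩

theorem trans (hXY : X ⊢⁻ Y) (hYZ : Y ⊢⁻ Z) : X ⊢⁻ Z := by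
  obtain ⟨f₁, g₁, h₁⟩ := hXY
  obtain ⟨f₂, g₂, h₂⟩ := hYZ
  exact ⟨fun u => f₂ (f₁ u), fun u e => g₁ u (g₂ (f₁ u) e),
    (h₁.reindex fun p : Choice true X × Choice false Z => (p.1, g₂ (f₁ p.1) p.2)).trans
      (h₂.reindex fun p : Choice true X × Choice false Z => (f₁ p.1, p.2))⟩

theorem and_map (hX : X ⊢⁻ X') (hY : Y ⊢⁻ Y') : X.and Y ⊢⁻ X'.and Y' := by
  obtain ⟨f₁, g₁, h₁⟩ := hX
  obtain ⟨f₂, g₂, h₂⟩ := hY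
  exact ⟨fun u => (f₁ u.1, f₂ u.2), fun u e => (g₁ u.1 e.1, g₂ u.2 e.2),
    (h₁.reindex fun p : Choice true (X.and Y) × Choice false (X'.and Y') => (p.1.1, p.2.1)).and_map
      (h₂.reindex fun p : Choice true (X.and Y) × Choice false (X'.and Y') => (p.1.2, p.2.2))⟩

theorem or_map (hX : X ⊢⁻ X') (hY : Y ⊢⁻ Y') : X.or Y ⊢⁻ X'.or Y' := by
  obtain ⟨f₁, g₁, h₁⟩ := hX
  obtain ⟨f₂, g₂, h₂⟩ := hY
  exact ⟨fun u => (f₁ u.1, f₂ u.2), fun u e => (g₁ u.1 e.1, g₂ u.2 e.2),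
    (h₁.reindex fun p : Choice true (X.or Y) × Choice false (X'.or Y') => (p.1.1, p.2.1)).or_map
      (h₂.reindex fun p : Choice true (X.or Y) × Choice false (X'.or Y') => (p.1.2, p.2.2))⟩

theorem impl_map (hX : X' ⊢⁺ X) (hY : Y ⊢⁻ Y') : X.impl Y ⊢⁻ X'.impl Y' := by
  obtain ⟨f₁, g₁, h₁⟩ := hX
  obtain ⟨f₂, g₂, h₂⟩ := hY
  exact ⟨fun u => (f₁ u.1, f₂ u.2), fun u e => (g₁ u.1 e.1, g₂ u.2 e.2),
    .impl_map
      (h₁.reindex fun p : Choice true (X.impl Y) × Choice false (X'.impl Y') => (p.1.1, p.2.1))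
      (h₂.reindex fun p : Choice true (X.impl Y) × Choice false (X'.impl Y') => (p.1.2, p.2.2))⟩

theorem box_map (h : X ⊢⁻ Y) : X.box ⊢⁻ Y.box := by
  obtain ⟨f, g, h⟩ := h
  obtain ⟨c, hc⟩ := UniformThm.lift h
  exact ⟨fun u => (.app c u.1, f u.2), fun u e => g u.2 e,
    .jst_app (hc.reindex fun p : Choice true X.box × Choice false Y.box => (p.1.2, p.2))⟩

theorem dia_map (h : X ⊢⁻ Y) : X.dia ⊢⁻ Y.dia := by
  obtain ⟨f, g, h⟩ := h
  obtain ⟨c, hc⟩ := UniformThm.lift h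
  exact ⟨fun u => (.prop c u.1, f u.2), fun u e => g u.2 e,
    .sat_prop (hc.reindex fun p : Choice true X.dia × Choice false Y.dia => (p.1.2, p.2))⟩

theorem and_left : X.and Y ⊢⁻ X :=
  ⟨fun u => u.1, fun _ e => (e, Classical.arbitrary _), .and_left⟩

theorem and_right : X.and Y ⊢⁻ Y :=
  ⟨fun u => u.2, fun _ e => (Classical.arbitrary _, e), .and_right⟩

theorem and_and_and_comm : (X.and Y).and (Z.and S) ⊢⁻ (X.and Z).and (Y.and S) :=
  ⟨fun u => ((u.1.1, u.2.1), (u.1.2, u.2.2)), fun _ e => ((e.1.1, e.2.1), (e.1.2, e.2.2)),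
    .and_and_and_comm⟩

theorem and_or_and : (X.and Y).or (Z.and S) ⊢⁻ (X.or Z).and (Y.or S) :=
  ⟨fun u => ((u.1.1, u.2.1), (u.1.2, u.2.2)), fun _ e => ((e.1.1, e.2.1), (e.1.2, e.2.2)),
    .and_or_and⟩

theorem and_and_or : (X.and Y).and (Z.or S) ⊢⁻ (X.and Z).or (Y.and S) :=
  ⟨fun u => ((u.1.1, u.2.1), (u.1.2, u.2.2)), fun _ e => ((e.1.1, e.2.1), (e.1.2, e.2.2)),
    .and_and_or⟩

theorem or_impl_and : (X.or Y).impl (Z.and S) ⊢⁻ (X.impl Z).and (Y.impl S) :=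
  ⟨fun u => ((u.1.1, u.2.1), (u.1.2, u.2.2)), fun _ e => ((e.1.1, e.2.1), (e.1.2, e.2.2)),
    .or_impl_and⟩

theorem box_and : (X.and Y).box ⊢⁻ X.box.and Y.box :=
  ⟨fun u => ((.app (.pconst 0) u.1, u.2.1), (.app (.pconst 0) u.1, u.2.2)), fun _ e => e,
    .and_intro (.jst_app_of_ax fun _ => .andE1) (.jst_app_of_ax fun _ => .andE2)⟩

theorem dia_and : (X.and Y).dia ⊢⁻ X.dia.and Y.dia :=
  ⟨fun u => ((.prop (.pconst 0) u.1, u.2.1), (.prop (.pconst 0) u.1, u.2.2)), fun _ e => e,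
    .and_intro (.sat_prop_of_ax fun _ => .andE1) (.sat_prop_of_ax fun _ => .andE2)⟩

theorem dia_or : (X.or Y).dia ⊢⁻ X.dia.or Y.dia :=
  ⟨fun u => ((u.1, u.2.1), (u.1, u.2.2)), fun _ e => e, .of_ax fun _ => .jk3⟩

theorem dia_bot : MForm.bot.dia ⊢⁻ .bot :=
  ⟨fun _ => (), fun _ e => e, .of_ax fun _ => .jk5⟩

theorem box_and_dia : X.box.and Y.dia ⊢⁻ (X.and Y).dia :=
  ⟨fun u => (.prop (.app (.pconst 0) u.1.1) u.2.1, (u.1.2, u.2.2)), fun _ e => e,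
    .uncurry ((Entails.jst_app_of_ax fun _ => .andI).trans (.of_ax fun _ => .jk2))⟩

theorem box_self (hT_eq : hT = true) : X.box ⊢⁻ X := by
  subst hT_eq
  exact ⟨fun u => u.2, fun _ e => e, .of_ax fun _ => .jtBox⟩

theorem box_box (h4_eq : h4 = true) : X.box ⊢⁻ X.box.box := by
  subst h4_eq
  exact ⟨fun u => (.bang u.1, u), fun _ e => e, .of_ax fun _ => .j4Box⟩

end NegEntails

namespace PosEntails

theorem refl : X ⊢⁺ X := ⟨id, fun _ e => e, .refl⟩

theorem trans (hXY : X ⊢⁺ Y) (hYZ : Y ⊢⁺ Z) : X ⊢⁺ Z := by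
  obtain ⟨f₁, g₁, h₁⟩ := hXY
  obtain ⟨f₂, g₂, h₂⟩ := hYZ
  exact ⟨fun u => f₁ (f₂ u), fun u e => g₂ u (g₁ (f₂ u) e),
    (h₁.reindex fun p : Choice false Z × Choice true X => (f₂ p.1, p.2)).trans
      (h₂.reindex fun p : Choice false Z × Choice true X => (p.1, g₁ (f₂ p.1) p.2))⟩

theorem and_map (hX : X ⊢⁺ X') (hY : Y ⊢⁺ Y') : X.and Y ⊢⁺ X'.and Y' := by
  obtain ⟨f₁, g₁, h₁⟩ := hX
  obtain ⟨f₂, g₂, h₂⟩ := hY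
  exact ⟨fun u => (f₁ u.1, f₂ u.2), fun u e => (g₁ u.1 e.1, g₂ u.2 e.2),
    (h₁.reindex fun p : Choice false (X'.and Y') × Choice true (X.and Y) => (p.1.1, p.2.1)).and_map
      (h₂.reindex fun p : Choice false (X'.and Y') × Choice true (X.and Y) => (p.1.2, p.2.2))⟩

theorem or_map (hX : X ⊢⁺ X') (hY : Y ⊢⁺ Y') : X.or Y ⊢⁺ X'.or Y' := by
  obtain ⟨f₁, g₁, h₁⟩ := hX
  obtain ⟨f₂, g₂, h₂⟩ := hY
  exact ⟨fun u => (f₁ u.1, f₂ u.2), fun u e => (g₁ u.1 e.1, g₂ u.2 e.2),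
    (h₁.reindex fun p : Choice false (X'.or Y') × Choice true (X.or Y) => (p.1.1, p.2.1)).or_map
      (h₂.reindex fun p : Choice false (X'.or Y') × Choice true (X.or Y) => (p.1.2, p.2.2))⟩

theorem impl_map (hX : X' ⊢⁻ X) (hY : Y ⊢⁺ Y') : X.impl Y ⊢⁺ X'.impl Y' := by
  obtain ⟨f₁, g₁, h₁⟩ := hX
  obtain ⟨f₂, g₂, h₂⟩ := hY
  exact ⟨fun u => (f₁ u.1, f₂ u.2), fun u e => (g₁ u.1 e.1, g₂ u.2 e.2),
    .impl_map
      (h₁.reindex fun p : Choice false (X'.impl Y') × Choice true (X.impl Y) => (p.1.1, p.2.1))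
      (h₂.reindex fun p : Choice false (X'.impl Y') × Choice true (X.impl Y) => (p.1.2, p.2.2))⟩

theorem box_map (h : X ⊢⁺ Y) : X.box ⊢⁺ Y.box := by
  obtain ⟨f, g, h⟩ := h
  obtain ⟨c, hc⟩ := UniformThm.lift h
  exact ⟨f, fun u e => (.app c e.1, g u e.2),
    .jst_app (hc.reindex fun p : Choice false Y.box × Choice true X.box => (p.1, p.2.2))⟩

theorem dia_map (h : X ⊢⁺ Y) : X.dia ⊢⁺ Y.dia := by
  obtain ⟨f, g, h⟩ := h
  obtain ⟨c, hc⟩ := UniformThm.lift h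
  exact ⟨f, fun u e => (.prop c e.1, g u e.2),
    .sat_prop (hc.reindex fun p : Choice false Y.dia × Choice true X.dia => (p.1, p.2.2))⟩

theorem or_inl : X ⊢⁺ X.or Y :=
  ⟨fun u => u.1, fun _ e => (e, Classical.arbitrary _), .or_inl⟩

theorem or_inr : Y ⊢⁺ X.or Y :=
  ⟨fun u => u.2, fun _ e => (Classical.arbitrary _, e), .or_inr⟩

theorem and_or_and : (X.and Y).or (Z.and S) ⊢⁺ (X.or Z).and (Y.or S) :=
  ⟨fun u => ((u.1.1, u.2.1), (u.1.2, u.2.2)), fun _ e => ((e.1.1, e.2.1), (e.1.2, e.2.2)),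
    .and_or_and⟩

theorem or_or_or_comm : (X.or Y).or (Z.or S) ⊢⁺ (X.or Z).or (Y.or S) :=
  ⟨fun u => ((u.1.1, u.2.1), (u.1.2, u.2.2)), fun _ e => ((e.1.1, e.2.1), (e.1.2, e.2.2)),
    .or_or_or_comm⟩

theorem impl_or_impl : (X.impl Y).or (Z.impl S) ⊢⁺ (X.and Z).impl (Y.or S) :=
  ⟨fun u => ((u.1.1, u.2.1), (u.1.2, u.2.2)), fun _ e => ((e.1.1, e.2.1), (e.1.2, e.2.2)),
    .impl_or_impl⟩

theorem box_or_box : X.box.or Y.box ⊢⁺ (X.or Y).box :=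
  ⟨fun u => u, fun _ e =>
      (.sum (.app (.pconst 0) e.1.1) (.app (.pconst 0) e.2.1), (e.1.2, e.2.2)),
    .or_elim ((Entails.jst_app_of_ax fun _ => .orI1).trans (.of_ax fun _ => .sum1))
      ((Entails.jst_app_of_ax fun _ => .orI2).trans (.of_ax fun _ => .sum2))⟩

theorem dia_or_dia : X.dia.or Y.dia ⊢⁺ (X.or Y).dia :=
  ⟨fun u => u, fun _ e =>
      (.uni (.prop (.pconst 0) e.1.1) (.prop (.pconst 0) e.2.1), (e.1.2, e.2.2)),
    .or_elim ((Entails.sat_prop_of_ax fun _ => .orI1).trans (.of_ax fun _ => .uni1))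
      ((Entails.sat_prop_of_ax fun _ => .orI2).trans (.of_ax fun _ => .uni2))⟩

theorem curry : (X.and Y).impl Z ⊢⁺ X.impl (Y.impl Z) :=
  ⟨fun u => ((u.1, u.2.1), u.2.2), fun _ e => (e.1.1, (e.1.2, e.2)), .impl_impl_of_and_impl⟩

theorem uncurry : X.impl (Y.impl Z) ⊢⁺ (X.and Y).impl Z :=
  ⟨fun u => (u.1.1, (u.1.2, u.2)), fun _ e => ((e.1, e.2.1), e.2.2), .and_impl_of_impl_impl⟩

theorem k1 : (X.impl Y).box ⊢⁺ X.box.impl Y.box :=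
  ⟨fun u => (u.1.2, u.2), fun u e => (e.2.1, (.app e.1 u.1.1, e.2.2)), .of_ax fun _ => .jk1⟩

theorem k2 : (X.impl Y).box ⊢⁺ X.dia.impl Y.dia :=
  ⟨fun u => (u.1.2, u.2), fun u e => (e.2.1, (.prop e.1 u.1.1, e.2.2)), .of_ax fun _ => .jk2⟩

theorem k4 : (X.dia.impl Y.box) ⊢⁺ (X.impl Y).box :=
  ⟨fun u => ((.svar 0, u.1), u.2), fun _ e => (.upd (.svar 0) e.2.1, (e.1, e.2.2)),
    .of_ax fun _ => .jk4⟩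

theorem self_dia (hT_eq : hT = true) : X ⊢⁺ X.dia := by
  subst hT_eq
  exact ⟨fun u => u, fun _ e => (.svar 0, e), .of_ax fun _ => .jtDia⟩

theorem dia_dia (h4_eq : h4 = true) : X.dia.dia ⊢⁺ X.dia := by
  subst h4_eq
  exact ⟨fun u => u, fun _ e => e.2, .of_ax fun _ => .j4Dia⟩

end PosEntails

/-! ## Contraction -/

theorem contraction (X : MForm) : (X ⊢⁻ X.and X) ∧ (X.or X ⊢⁺ X) := by
  induction X with
  | bot | atom =>
    exact ⟨⟨fun _ => ((), ()), fun _ _ => (), .and_intro .refl .refl⟩,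
      ⟨fun _ => ((), ()), fun _ _ => (), .or_elim .refl .refl⟩⟩
  | and A B ihA ihB =>
    exact ⟨(ihA.1.and_map ihB.1).trans .and_and_and_comm,
      PosEntails.and_or_and.trans (ihA.2.and_map ihB.2)⟩
  | or A B ihA ihB =>
    exact ⟨(ihA.1.or_map ihB.1).trans .and_or_and,
      PosEntails.or_or_or_comm.trans (ihA.2.or_map ihB.2)⟩
  | impl A B ihA ihB =>
    exact ⟨(NegEntails.impl_map ihA.2 ihB.1).trans .or_impl_and,
      PosEntails.impl_or_impl.trans (.impl_map ihA.1 ihB.2)⟩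
  | box A ih => exact ⟨ih.1.box_map.trans .box_and, PosEntails.box_or_box.trans ih.2.box_map⟩
  | dia A ih => exact ⟨ih.1.dia_map.trans .dia_and, PosEntails.dia_or_dia.trans ih.2.dia_map⟩

theorem NegEntails.and_self : X ⊢⁻ X.and X := (contraction X).1

theorem PosEntails.or_self : X.or X ⊢⁺ X := (contraction X).2

theorem NegEntails.and_intro (hX : C ⊢⁻ X) (hY : C ⊢⁻ Y) : C ⊢⁻ X.and Y :=
  and_self.trans (hX.and_map hY)

theorem NegEntails.and_comm : X.and Y ⊢⁻ Y.and X := and_intro and_right and_left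

theorem NegEntails.and_or_distrib : X.and (Y.or Z) ⊢⁻ (X.and Y).or (X.and Z) :=
  (and_self.and_map refl).trans and_and_or

theorem PosEntails.impl_swap : X.impl (Y.impl Z) ⊢⁺ Y.impl (X.impl Z) :=
  uncurry.trans ((impl_map .and_comm refl).trans curry)

theorem PosEntails.cut (h : D ⊢⁻ N) : D.impl (N.impl P) ⊢⁺ D.impl P :=
  uncurry.trans (impl_map (.and_intro .refl h) refl)

theorem PosEntails.box_impl_impl : (D.impl (X.impl P)).box ⊢⁺ X.box.impl (D.impl P).box :=
  impl_swap.box_map.trans k1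

theorem PosEntails.dia_and_impl_box :
    (D.and N).dia.impl ((D.and N).impl P).box ⊢⁺ (D.impl (N.impl P)).box :=
  k4.trans (((cut .refl).trans curry).box_map)

/-! ## Entailment with two premises -/

namespace PosEntails₂

theorem trans (h : PosEntails₂ hT h4 Q P S) (hSX : S ⊢⁺ X) : PosEntails₂ hT h4 Q P X := by
  obtain ⟨f₁, f₂, g, h⟩ := h
  obtain ⟨f, g', h'⟩ := hSX
  exact ⟨fun u => f₁ (f u), fun u e => f₂ (f u) e, fun u e e' => g' u (g (f u) e e'),
    (h.reindex fun p : Choice false X × Choice true Q × Choice true P => (f p.1, p.2)).trans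
      (h'.reindex fun p : Choice false X × Choice true Q × Choice true P =>
        (p.1, g (f p.1) p.2.1 p.2.2))⟩

theorem and_intro : PosEntails₂ hT h4 X Y (X.and Y) :=
  ⟨fun u => u.1, fun u _ => u.2, fun _ e e' => (e, e'), .refl⟩

theorem or_elim : PosEntails₂ hT h4 (X.impl P) (Y.impl P) ((X.or Y).impl P) :=
  have parallel : PosEntails₂ hT h4 (X.impl P) (Y.impl P) ((X.or Y).impl (P.or P)) :=
    ⟨fun u => (u.1.1, u.2.1), fun u _ => (u.1.2, u.2.2), fun _ e e' => ((e.1, e'.1), (e.2, e'.2)),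
      .impl_and_impl_or⟩
  parallel.trans (.impl_map .refl .or_self)

theorem impl_map (h : PosEntails₂ hT h4 Q P S) :
    PosEntails₂ hT h4 (D.impl Q) (D.impl P) (D.impl S) := by
  obtain ⟨f₁, f₂, g, h⟩ := h
  have parallel : PosEntails₂ hT h4 (D.impl Q) (D.impl P) ((D.and D).impl S) :=
    ⟨fun u => (u.1.1, f₁ u.2), fun u e => (u.1.2, f₂ u.2 e.2),
      fun u e e' => ((e.1, e'.1), g u.2 e.2 e'.2),
      .trans .impl_and_impl_and (.impl_map .refl (h.reindex fun p :
        Choice false ((D.and D).impl S) × Choice true (D.impl Q) × Choice true (D.impl P) =>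
          (p.1.2, (p.2.1.2, p.2.2.2))))⟩
  exact parallel.trans (.impl_map .and_self .refl)

theorem box_map (h : PosEntails₂ hT h4 Q P S) : PosEntails₂ hT h4 Q.box P.box S.box := by
  obtain ⟨f₁, f₂, g, h⟩ := h
  obtain ⟨c, hc⟩ := UniformThm.lift h.curry
  exact ⟨f₁, fun u e => f₂ u e.2, fun u e e' => (.app (.app c e.1) e'.1, g u e.2 e'.2),
    .uncurry ((Entails.jst_app (hc.reindex fun p :
      Choice false S.box × Choice true Q.box × Choice true P.box =>
        (p.1, (p.2.1.2, p.2.2.2)))).trans (.of_ax fun _ => .jk1))⟩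

end PosEntails₂

namespace MixedEntails

theorem mp : MixedEntails hT h4 X (X.impl Y) Y :=
  ⟨fun u => u.1, fun u _ => u.2, fun _ e e' => (e, e'), .mp .and_right .and_left⟩

theorem comp_neg (hCE : C ⊢⁻ E) (h : MixedEntails hT h4 Q E D) : MixedEntails hT h4 Q C D := by
  obtain ⟨f, g', h'⟩ := hCE
  obtain ⟨f₁, f₂, g, h⟩ := h
  exact ⟨fun u => f₁ (f u), fun u e => f₂ (f u) e, fun u e d => g' u (g (f u) e d),
    .trans
      (.and_map .refl (h'.reindex fun p : Choice true C × Choice true Q × Choice false D =>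
        (p.1, g (f p.1) p.2.1 p.2.2)))
      (h.reindex fun p : Choice true C × Choice true Q × Choice false D => (f p.1, p.2))⟩

theorem impl_and_map (h : MixedEntails hT h4 Q E N) :
    MixedEntails hT h4 (D.impl Q) (D.and E) (D.and N) := by
  obtain ⟨f₁, f₂, g, h⟩ := h
  have parallel : MixedEntails hT h4 (D.impl Q) ((D.and D).and E) (D.and N) :=
    ⟨fun u => (u.1.1, f₁ u.2), fun u e => (u.1.2, f₂ u.2 e.2),
      fun u e d => ((e.1, d.1), g u.2 e.2 d.2),
      .impl_and_and_and (h.reindex fun p :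
        Choice true ((D.and D).and E) × Choice true (D.impl Q) × Choice false (D.and N) =>
          (p.1.2, (p.2.1.2, p.2.2.2)))⟩
  exact parallel.comp_neg (.and_map .and_self .refl)

theorem box_dia_map (h : MixedEntails hT h4 Q E N) : MixedEntails hT h4 Q.box E.dia N.dia := by
  obtain ⟨f₁, f₂, g, h⟩ := h
  obtain ⟨c, hc⟩ := UniformThm.lift h.curry
  exact ⟨fun u => f₁ u.2, fun u e => (.prop (.app c e.1) u.1, f₂ u.2 e.2),
    fun u e d => g u.2 e.2 d,
    .uncurry ((Entails.jst_app (hc.reindex fun p :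
      Choice true E.dia × Choice true Q.box × Choice false N.dia =>
        (p.1.2, (p.2.1.2, p.2.2)))).trans (.of_ax fun _ => .jk2))⟩

theorem posEntails₂_impl (h : MixedEntails hT h4 Q E D) :
    PosEntails₂ hT h4 Q (D.impl P) (E.impl P) := by
  obtain ⟨f₁, f₂, g, h⟩ := h
  exact ⟨fun u => f₁ u.1, fun u e => (f₂ u.1 e, u.2), fun u e e' => (g u.1 e e'.1, e'.2),
    .and_impl_of_and_entails (h.reindex fun p :
      Choice false (E.impl P) × Choice true Q × Choice true (D.impl P) =>
        (p.1.1, (p.2.1, p.2.2.1)))⟩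

end MixedEntails

end PolarisedEntailment

/-! ## Realisability -/

/-- The formula `X` is realisable: whatever terms are given for its negative modalities, there
are terms for its positive modalities making the realisation provable. -/
def Realisable (hT h4 : Bool) (X : MForm) : Prop :=
  ∀ u : Choice false X, ∃ e : Choice true X, JThm hT h4 (realise true X u e)

/-- Truth, available in a language whose only propositional constant is falsity. -/
def MForm.verum : MForm := .impl .bot .bot

section Derivability

variable {X Y P Q S N C D E : MForm}

theorem PosEntails.of_verum_impl : MForm.verum.impl X ⊢⁺ X :=
  ⟨fun u => (((), ()), u), fun _ e => e.2, .mp .refl (.of_uniformThm Entails.refl)⟩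

theorem PosEntails.of_verum_dia_impl_box :
    MForm.verum.dia.impl (MForm.verum.impl X).box ⊢⁺ X.box :=
  k4.trans (of_verum_impl.trans of_verum_impl).box_map

namespace Realisable

theorem mono (hX : Realisable hT h4 X) (h : X ⊢⁺ Y) : Realisable hT h4 Y := by
  obtain ⟨f, g, h⟩ := h
  intro u
  obtain ⟨e, he⟩ := hX (f u)
  exact ⟨g u e, .mp (h.jThm (u, e)) he⟩

theorem mono₂ (hQ : Realisable hT h4 Q) (hP : Realisable hT h4 P)
    (h : PosEntails₂ hT h4 Q P S) : Realisable hT h4 S := by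
  obtain ⟨f₁, f₂, g, h⟩ := h
  intro u
  obtain ⟨e, he⟩ := hQ (f₁ u)
  obtain ⟨e', he'⟩ := hP (f₂ u e)
  exact ⟨g u e e', .mp (h.jThm (u, e, e')) (.mp (.mp (.can [] .andI) he) he')⟩

theorem impl (hP : Realisable hT h4 P) : Realisable hT h4 (C.impl P) := by
  intro u
  obtain ⟨e, he⟩ := hP u.2
  exact ⟨(Classical.arbitrary _, e), .mp (.can [] .ax1) he⟩

theorem box (hP : Realisable hT h4 P) : Realisable hT h4 P.box := by
  intro u
  obtain ⟨e, he⟩ := hP u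
  obtain ⟨c, hc⟩ := (UniformThm.of_jThm he).lift
  exact ⟨(c, e), hc.jThm ()⟩

theorem bot_impl : Realisable hT h4 (MForm.bot.impl P) :=
  fun _ => ⟨((), Classical.arbitrary _), .can [] .exf⟩

theorem atom_impl_self {n : ℕ} : Realisable hT h4 ((MForm.atom n).impl (.atom n)) :=
  fun _ => ⟨((), ()), (Entails.refl (F := fun _ : Unit => JForm.atom n)).jThm ()⟩

end Realisable

/-! ## Contexts -/

/-- The antecedents along the branch of a nested sequent that leads from the root to the current
node; `child D w` has `D` at the current node, and `w` ends at its parent. -/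
inductive Ctx : Type
  | root (C : MForm)
  | child (D : MForm) (w : Ctx)

namespace Ctx

variable {w w' v : Ctx} {k : ℕ}

/-- The antecedent at the current node. -/
def head : Ctx → MForm
  | root C => C
  | child D _ => D

/-- Adds a hypothesis at the current node, and its existence at the ancestors to keep the context
coherent. -/
def insert : Ctx → MForm → Ctx
  | root C, N => root (C.and N)
  | child D w, N => child (D.and N) (w.insert (D.and N).dia)

/-- Derivability of a succedent at the current node, as realisability of the formula that the
nested sequent stands for. -/
def Derives (hT h4 : Bool) : Ctx → MForm → Prop
  | root C, P => Realisable hT h4 (C.impl P)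
  | child D w, P => w.Derives hT h4 (D.impl P).box

/-- Derivability of a succedent at the `k`-th ancestor of the current node; it holds vacuously
beyond the root. -/
def DerivesAt (hT h4 : Bool) : ℕ → Ctx → MForm → Prop
  | 0, w, P => w.Derives hT h4 P
  | _ + 1, root _, _ => True
  | k + 1, child _ w, P => DerivesAt hT h4 k w P

/-- Each node knows that its child on the branch exists. -/
def Coherent (hT h4 : Bool) : Ctx → Prop
  | root _ => True
  | child D w => NegEntails hT h4 w.head D.dia ∧ w.Coherent hT h4

/-- The contexts have the same length, and the second has the stronger antecedents. -/
inductive Le (hT h4 : Bool) : Ctx → Ctx → Prop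
  | root {C C' : MForm} (h : NegEntails hT h4 C' C) : Le hT h4 (root C) (root C')
  | child {D D' : MForm} {w w' : Ctx} (h : NegEntails hT h4 D' D) (hw : Le hT h4 w w') :
      Le hT h4 (child D w) (child D' w')

namespace Le

theorem refl (w : Ctx) : Le hT h4 w w := by
  induction w with
  | root => exact root .refl
  | child D w ih => exact child .refl ih

theorem trans (hwv : Le hT h4 w v) (hvw' : Le hT h4 v w') : Le hT h4 w w' := by
  induction hwv generalizing w' with
  | root h => cases hvw' with | root h' => exact root (h'.trans h)
  | child h _ ih => cases hvw' with | child h' hw' => exact child (h'.trans h) (ih hw')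

theorem head (h : Le hT h4 w w') : w'.head ⊢⁻ w.head := by
  cases h with
  | root h => exact h
  | child h _ => exact h

theorem insert (w : Ctx) (N : MForm) : Le hT h4 w (w.insert N) := by
  induction w generalizing N with
  | root C => exact root .and_left
  | child D w ih => exact child .and_left (ih _)

end Le

theorem head_insert (w : Ctx) (N : MForm) : (w.insert N).head ⊢⁻ N := by
  cases w <;> exact .and_right

theorem coherent_insert (w : Ctx) (N : MForm) : (w.insert N).Coherent hT h4 := by
  induction w generalizing N with
  | root => trivial
  | child D w ih => exact ⟨head_insert .., ih _⟩

namespace Derives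

theorem mono (hP : w.Derives hT h4 P) (h : P ⊢⁺ Q) : w.Derives hT h4 Q := by
  induction w generalizing P Q with
  | root C => exact Realisable.mono hP (.impl_map .refl h)
  | child D w ih => exact ih hP (PosEntails.impl_map .refl h).box_map

theorem mono₂ (hQ : w.Derives hT h4 Q) (hP : w.Derives hT h4 P) (h : PosEntails₂ hT h4 Q P S) :
    w.Derives hT h4 S := by
  induction w generalizing P Q S with
  | root C => exact Realisable.mono₂ hQ hP h.impl_map
  | child D w ih => exact ih hQ hP h.impl_map.box_map

theorem of_realisable (h : Realisable hT h4 P) : w.Derives hT h4 P := by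
  induction w generalizing P with
  | root => exact h.impl
  | child _ _ ih => exact ih h.impl.box

theorem cut (h : w.Derives hT h4 (N.impl P)) (hN : w.head ⊢⁻ N) : w.Derives hT h4 P := by
  cases w with
  | root C => exact Realisable.mono h (.cut hN)
  | child D w => exact Derives.mono (w := w) h (PosEntails.cut hN).box_map

theorem of_insert (h : (w.insert N).Derives hT h4 P) : w.Derives hT h4 (N.impl P) := by
  induction w generalizing N P with
  | root => exact Realisable.mono h .curry
  | child D w ih => exact Derives.mono (w := w) (ih h) .dia_and_impl_box

theorem of_le (h : w.Derives hT h4 P) (hw : Le hT h4 w w') : w'.Derives hT h4 P := by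
  induction hw generalizing P with
  | root hC => exact Realisable.mono h (.impl_map hC .refl)
  | @child _ _ _ w' hD _ ih =>
    exact Derives.mono (w := w') (ih h) (PosEntails.impl_map hD .refl).box_map

end Derives

namespace DerivesAt

theorem cut (hw : w.Coherent hT h4) (hN : w.head ⊢⁻ N) (h : DerivesAt hT h4 k (w.insert N) P) :
    DerivesAt hT h4 k w P := by
  induction k generalizing w N with
  | zero => exact (Derives.of_insert h).cut hN
  | succ k ih =>
    cases w with
    | root => trivial
    | child D w => exact ih hw.2 (hw.1.trans (NegEntails.and_intro .refl hN).dia_map) h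

theorem bot_left (hw : w.Coherent hT h4) (hN : w.head ⊢⁻ .bot) : DerivesAt hT h4 k w P := by
  induction k generalizing w with
  | zero => exact (Derives.of_realisable .bot_impl).cut hN
  | succ k ih =>
    cases w with
    | root => trivial
    | child D w => exact ih hw.2 ((hw.1.trans hN.dia_map).trans .dia_bot)

theorem or_left (hw : w.Coherent hT h4) (hXY : w.head ⊢⁻ X.or Y)
    (hX : DerivesAt hT h4 k (w.insert X) P) (hY : DerivesAt hT h4 k (w.insert Y) P) :
    DerivesAt hT h4 k w P := by
  induction k generalizing w X Y with
  | zero => exact ((Derives.of_insert hX).mono₂ (.of_insert hY) .or_elim).cut hXY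
  | succ k ih =>
    cases w with
    | root => trivial
    | child D w =>
      have hdist : D ⊢⁻ (D.and X).or (D.and Y) :=
        (NegEntails.and_intro .refl hXY).trans .and_or_distrib
      exact ih hw.2 ((hw.1.trans hdist.dia_map).trans .dia_or) hX hY

theorem mixed_left (hw : w.Coherent hT h4) (hQE : MixedEntails hT h4 Q E N) (hE : w.head ⊢⁻ E)
    (hQ : w.Derives hT h4 Q) (h : DerivesAt hT h4 k (w.insert N) P) : DerivesAt hT h4 k w P := by
  induction k generalizing w Q E N with
  | zero => exact (Derives.mono₂ hQ (.of_insert h) hQE.posEntails₂_impl).cut hE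
  | succ k ih =>
    cases w with
    | root => trivial
    | child D w =>
      exact ih hw.2 hQE.impl_and_map.box_dia_map
        (hw.1.trans (NegEntails.and_intro .refl hE).dia_map) hQ h

theorem box_left (hw : (child D w).Coherent hT h4) (hX : w.head ⊢⁻ X.box)
    (h : DerivesAt hT h4 k ((child D w).insert X) P) : DerivesAt hT h4 k (child D w) P := by
  cases k with
  | zero =>
    have hDX : w.Derives hT h4 (D.impl (X.impl P)).box := Derives.of_insert h
    exact (hDX.mono .box_impl_impl).cut hX
  | succ k =>
    have hdia : w.head ⊢⁻ (D.and X).dia :=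
      ((hX.and_intro hw.1).trans .box_and_dia).trans NegEntails.and_comm.dia_map
    exact cut (w := w) (k := k) hw.2 hdia h

end DerivesAt

end Ctx

end Derivability

/-! ## Beth semantics -/

section BethSemantics

variable {W ι : Type*} [Preorder W]

section PolarClosure

/-- The points each of whose extensions reaches every goal that contains the members of `S` beyond
it: closure under the polarity between up-closed sets and goals, localised at each point. -/
def polarClosure (goal : ι → Set W) (S : Set W) : Set W :=
  {w | ∀ w' ≥ w, ∀ i, S ∩ Set.Ici w' ⊆ goal i → w' ∈ goal i}

variable {goal : ι → Set W} {S T : Set W} {w : W} {i : ι}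

theorem isUpperSet_polarClosure : IsUpperSet (polarClosure goal S) :=
  fun _ _ hle hw _ hle' => hw _ (hle.trans hle')

theorem subset_polarClosure (hS : IsUpperSet S) : S ⊆ polarClosure goal S :=
  fun _ hw _ hle _ hi => hi ⟨hS hle hw, le_rfl⟩

theorem polarClosure_goal_subset : polarClosure goal (goal i) ⊆ goal i :=
  fun w hw => hw w le_rfl i Set.inter_subset_left

theorem mem_polarClosure_bind (hw : w ∈ polarClosure goal S)
    (hST : ∀ w' ≥ w, w' ∈ S → w' ∈ polarClosure goal T) : w ∈ polarClosure goal T :=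
  fun w' hle i hi => hw w' hle i fun w'' ⟨hS, hle'⟩ =>
    hST w'' (hle.trans hle') hS w'' le_rfl i fun _ ⟨hT, hle''⟩ => hi ⟨hT, hle'.trans hle''⟩

theorem mem_polarClosure_map (hw : w ∈ polarClosure goal S)
    (hST : ∀ w' ≥ w, w' ∈ S → w' ∈ T) : w ∈ polarClosure goal T :=
  fun w' hle i hi => hw w' hle i fun w'' ⟨hS, hle'⟩ => hi ⟨hST w'' (hle.trans hle') hS, hle'⟩

theorem polarClosure_mono (hST : S ⊆ T) : polarClosure goal S ⊆ polarClosure goal T :=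
  fun _ hw => mem_polarClosure_map hw fun _ _ h => hST h

theorem polarClosure_polarClosure_subset :
    polarClosure goal (polarClosure goal S) ⊆ polarClosure goal S :=
  fun _ hw => mem_polarClosure_bind hw fun _ _ h => h

end PolarClosure

/-- A Beth model of the intuitionistic modal logic selected by `hT` and `h4`, with the closure
operator given by a family of goals. The accessibility relation is a bisimulation for the order,
and its images and preimages are compatible with closure. -/
structure BethModel (hT h4 : Bool) (W ι : Type*) [Preorder W] where
  /-- The goals that generate the closure operator. -/
  goal : ι → Set W
  /-- The accessibility relation. -/
  acc : W → W → Prop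
  /-- The valuation of the atoms. -/
  val : ℕ → Set W
  isUpperSet_val (n : ℕ) : IsUpperSet (val n)
  polarClosure_val_subset (n : ℕ) : polarClosure goal (val n) ⊆ val n
  exists_acc_of_le_left {w w' v : W} : acc w v → w ≤ w' → ∃ v' ≥ v, acc w' v'
  exists_acc_of_le_right {w v v' : W} : acc w v → v ≤ v' → ∃ w' ≥ w, acc w' v'
  image_mem_polarClosure {w v : W} {S : Set W} :
    acc w v → w ∈ polarClosure goal S → v ∈ polarClosure goal {v' | ∃ w' ∈ S, acc w' v'}
  preimage_mem_polarClosure {w v : W} {S : Set W} :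
    acc w v → v ∈ polarClosure goal S → w ∈ polarClosure goal {w' | ∃ v' ∈ S, acc w' v'}
  acc_refl : hT = true → ∀ w, acc w w
  acc_trans : h4 = true → ∀ {u v w}, acc u v → acc v w → acc u w

namespace BethModel

variable {X Y : MForm} {S : Set W} {w v : W}

/-- The set of points at which a formula is true. -/
def interp (M : BethModel hT h4 W ι) : MForm → Set W
  | .bot => polarClosure M.goal ∅
  | .atom n => M.val n
  | .and X Y => M.interp X ∩ M.interp Y
  | .or X Y => polarClosure M.goal (M.interp X ∪ M.interp Y)
  | .impl X Y => {w | ∀ w' ≥ w, w' ∈ M.interp X → w' ∈ M.interp Y}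
  | .box X => {w | ∀ w' ≥ w, ∀ v, M.acc w' v → v ∈ M.interp X}
  | .dia X => polarClosure M.goal {w | ∃ v ∈ M.interp X, M.acc w v}

variable (M : BethModel hT h4 W ι)

theorem isUpperSet_interp (X : MForm) : IsUpperSet (M.interp X) := by
  induction X with
  | bot => exact isUpperSet_polarClosure
  | atom n => exact M.isUpperSet_val n
  | and _ _ hX hY => exact hX.inter hY
  | or => exact isUpperSet_polarClosure
  | impl => exact fun _ _ hle h _ hle' => h _ (hle.trans hle')
  | box => exact fun _ _ hle h _ hle' => h _ (hle.trans hle')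
  | dia => exact isUpperSet_polarClosure

theorem polarClosure_interp_subset (X : MForm) :
    polarClosure M.goal (M.interp X) ⊆ M.interp X := by
  induction X with
  | bot => exact polarClosure_polarClosure_subset
  | atom n => exact M.polarClosure_val_subset n
  | and _ _ hX hY =>
    exact fun _ h => ⟨hX (polarClosure_mono Set.inter_subset_left h),
      hY (polarClosure_mono Set.inter_subset_right h)⟩
  | or => exact polarClosure_polarClosure_subset
  | impl X _ _ hY =>
    exact fun _ h w' hle hX => hY (mem_polarClosure_map (isUpperSet_polarClosure hle h)
      fun w'' hle' hXY => hXY w'' le_rfl (M.isUpperSet_interp X hle' hX))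
  | box _ hX =>
    refine fun _ h w' hle v hacc => hX ?_
    refine polarClosure_mono ?_
      (M.image_mem_polarClosure hacc (isUpperSet_polarClosure hle h))
    exact fun _ ⟨w'', hbox, hacc'⟩ => hbox w'' le_rfl _ hacc'
  | dia => exact polarClosure_polarClosure_subset

theorem isUpperSet_preimage (hS : IsUpperSet S) : IsUpperSet {w | ∃ v ∈ S, M.acc w v} := by
  rintro w w' hle ⟨v, hv, hacc⟩
  obtain ⟨v', hle', hacc'⟩ := M.exists_acc_of_le_left hacc hle
  exact ⟨v', hS hle' hv, hacc'⟩

theorem mem_interp_dia_of_acc (hacc : M.acc w v) (hv : v ∈ M.interp X) : w ∈ M.interp X.dia :=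
  subset_polarClosure (M.isUpperSet_preimage (M.isUpperSet_interp X)) ⟨v, hv, hacc⟩

theorem polarClosure_preimage_polarClosure_subset :
    polarClosure M.goal {w | ∃ v ∈ polarClosure M.goal S, M.acc w v} ⊆
      polarClosure M.goal {w | ∃ v ∈ S, M.acc w v} :=
  fun _ h => mem_polarClosure_bind h fun _ _ ⟨_, hv, hacc⟩ => M.preimage_mem_polarClosure hacc hv

theorem mem_interp_impl (h : M.interp X ⊆ M.interp Y) : w ∈ M.interp (X.impl Y) :=
  fun _ _ hX => h hX

theorem subset_interp_or_left : M.interp X ⊆ M.interp (X.or Y) :=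
  Set.subset_union_left.trans
    (subset_polarClosure ((M.isUpperSet_interp X).union (M.isUpperSet_interp Y)))

theorem subset_interp_or_right : M.interp Y ⊆ M.interp (X.or Y) :=
  Set.subset_union_right.trans
    (subset_polarClosure ((M.isUpperSet_interp X).union (M.isUpperSet_interp Y)))

theorem interp_bot_subset : M.interp .bot ⊆ M.interp X :=
  (polarClosure_mono (Set.empty_subset _)).trans (M.polarClosure_interp_subset X)

theorem interp_dia_or_subset : M.interp (X.or Y).dia ⊆ M.interp (X.dia.or Y.dia) := by
  refine M.polarClosure_preimage_polarClosure_subset.trans (polarClosure_mono ?_)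
  rintro w ⟨v, hX | hY, hacc⟩
  exacts [.inl (M.mem_interp_dia_of_acc hacc hX), .inr (M.mem_interp_dia_of_acc hacc hY)]

theorem interp_dia_bot_subset : M.interp MForm.bot.dia ⊆ M.interp .bot :=
  M.polarClosure_preimage_polarClosure_subset.trans (polarClosure_mono fun _ ⟨_, hv, _⟩ => hv)

theorem interp_dia_impl_box_subset :
    M.interp (X.dia.impl Y.box) ⊆ M.interp (X.impl Y).box := by
  intro w h w' hle v hacc v' hle' hX
  obtain ⟨w'', hle'', hacc'⟩ := M.exists_acc_of_le_right hacc hle'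
  exact h w'' (hle.trans hle'') (M.mem_interp_dia_of_acc hacc' hX) w'' le_rfl v' hacc'

theorem interp_box_subset_box_box (h4_eq : h4 = true) :
    M.interp X.box ⊆ M.interp X.box.box := by
  intro w h w' hle v hacc v' hle' u hacc'
  obtain ⟨w'', hle'', hacc''⟩ := M.exists_acc_of_le_right hacc hle'
  exact h w'' (hle.trans hle'') u (M.acc_trans h4_eq hacc'' hacc')

theorem interp_dia_dia_subset (h4_eq : h4 = true) : M.interp X.dia.dia ⊆ M.interp X.dia :=
  M.polarClosure_preimage_polarClosure_subset.trans <| polarClosure_mono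
    fun _ ⟨_, ⟨u, hu, hacc'⟩, hacc⟩ => ⟨u, hu, M.acc_trans h4_eq hacc hacc'⟩

theorem mem_interp_of_mAx (h : MAx hT h4 X) (w : W) : w ∈ M.interp X := by
  cases h with
  | ax1 => exact fun _ _ hA _ hle _ => M.isUpperSet_interp _ hle hA
  | ax2 =>
    exact fun _ _ hABC _ hle hAB w₃ hle' hA =>
      hABC w₃ (hle.trans hle') hA w₃ le_rfl (hAB w₃ hle' hA)
  | andI => exact fun _ _ hA _ hle hB => ⟨M.isUpperSet_interp _ hle hA, hB⟩
  | andE1 => exact M.mem_interp_impl Set.inter_subset_left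
  | andE2 => exact M.mem_interp_impl Set.inter_subset_right
  | orI1 => exact M.mem_interp_impl M.subset_interp_or_left
  | orI2 => exact M.mem_interp_impl M.subset_interp_or_right
  | @orE _ _ _ _ C =>
    exact fun _ _ hAC _ hle hBC _ hle' hAB => M.polarClosure_interp_subset C <|
      mem_polarClosure_map hAB fun w₄ hle'' hw₄ => hw₄.elim
        (hAC w₄ ((hle.trans hle').trans hle'')) (hBC w₄ (hle'.trans hle''))
  | exf => exact M.mem_interp_impl M.interp_bot_subset
  | k1 =>
    exact fun _ _ hAB _ hle hA w₃ hle' v hacc =>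
      hAB w₃ (hle.trans hle') v hacc v le_rfl (hA w₃ hle' v hacc)
  | k2 =>
    exact fun _ _ hAB _ hle hA => mem_polarClosure_map hA fun w₃ hle' ⟨v, hv, hacc⟩ =>
      ⟨v, hAB w₃ (hle.trans hle') v hacc v le_rfl hv, hacc⟩
  | k3 => exact M.mem_interp_impl M.interp_dia_or_subset
  | k4 => exact M.mem_interp_impl M.interp_dia_impl_box_subset
  | k5 => exact M.mem_interp_impl M.interp_dia_bot_subset
  | tBox => exact M.mem_interp_impl fun w h => h w le_rfl w (M.acc_refl rfl w)
  | tDia => exact M.mem_interp_impl fun w => M.mem_interp_dia_of_acc (M.acc_refl rfl w)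
  | fourBox => exact M.mem_interp_impl (M.interp_box_subset_box_box rfl)
  | fourDia => exact M.mem_interp_impl (M.interp_dia_dia_subset rfl)

theorem mem_interp_of_mThm (h : MThm hT h4 X) (w : W) : w ∈ M.interp X := by
  induction h generalizing w with
  | ax h => exact M.mem_interp_of_mAx h w
  | mp _ _ hXY hX => exact hXY w w le_rfl (hX w)
  | nec _ hX => exact fun _ _ v _ => hX v

end BethModel

end BethSemantics

/-! ## The canonical model -/

/-- The points of the canonical model: the coherent contexts. -/
structure Point (hT h4 : Bool) where
  /-- The underlying context. -/
  ctx : Ctx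
  coherent : ctx.Coherent hT h4

namespace Point

variable {w w' v v' : Point hT h4} {X Y D : MForm} {S : Set (Point hT h4)} {k : ℕ}

instance : Preorder (Point hT h4) where
  le w w' := Ctx.Le hT h4 w.ctx w'.ctx
  le_refl w := .refl w.ctx
  le_trans _ _ _ := .trans

/-- Extends the branch by a node with antecedent `D`. -/
def child (w : Point hT h4) (D : MForm) (hD : w.ctx.head ⊢⁻ D.dia) : Point hT h4 :=
  ⟨.child D w.ctx, hD, w.coherent⟩

/-- Adds a hypothesis at the current node. -/
def insert (w : Point hT h4) (X : MForm) : Point hT h4 :=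
  ⟨w.ctx.insert X, Ctx.coherent_insert w.ctx X⟩

theorem le_insert (w : Point hT h4) (X : MForm) : w ≤ w.insert X :=
  Ctx.Le.insert w.ctx X

/-- The points at which the antecedent includes a given formula. -/
def assumable (hT h4 : Bool) (X : MForm) : Set (Point hT h4) :=
  {w | NegEntails hT h4 w.ctx.head X}

/-- The points at which a given succedent is derivable. -/
def derivable (hT h4 : Bool) (X : MForm) : Set (Point hT h4) :=
  {w | w.ctx.Derives hT h4 X}

/-- The goals of the canonical model: a succedent at an ancestor of the current node. -/
def goal (hT h4 : Bool) (i : ℕ × MForm) : Set (Point hT h4) :=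
  {w | w.ctx.DerivesAt hT h4 i.1 i.2}

theorem isUpperSet_assumable : IsUpperSet (assumable hT h4 X) :=
  fun _ _ hle hw => (Ctx.Le.head hle).trans hw

theorem isUpperSet_derivable : IsUpperSet (derivable hT h4 X) :=
  fun _ _ hle hw => Ctx.Derives.of_le hw hle

theorem polarClosure_derivable_subset :
    polarClosure (goal hT h4) (derivable hT h4 X) ⊆ derivable hT h4 X :=
  polarClosure_goal_subset (i := (0, X))

theorem insert_mem_assumable (w : Point hT h4) (X : MForm) : w.insert X ∈ assumable hT h4 X :=
  Ctx.head_insert w.ctx X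

/-- The second point extends the branch of the first by one node. -/
inductive IsChild (w : Point hT h4) : Point hT h4 → Prop
  | child (D : MForm) (hD : w.ctx.head ⊢⁻ D.dia) : IsChild w (w.child D hD)

namespace IsChild

theorem exists_of_le_left (h : IsChild w v) (hle : w ≤ w') : ∃ v' ≥ v, IsChild w' v' := by
  obtain ⟨D, hD⟩ := h
  exact ⟨w'.child D ((Ctx.Le.head hle).trans hD), .child .refl hle, .child ..⟩

theorem exists_of_le_right (h : IsChild w v) (hle : v ≤ v') : ∃ w' ≥ w, IsChild w' v' := by
  obtain ⟨D, hD⟩ := h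
  obtain ⟨v', hv'⟩ := v'
  cases hle with
  | @child _ D' _ w' _ hle => exact ⟨⟨w', hv'.2⟩, hle, .child D' hv'.1⟩

/-- A goal at the child is the goal at the parent for its boxed form or for its predecessor
index. -/
theorem exists_goal (D : MForm) (i : ℕ × MForm) :
    ∃ j, ∀ (w : Point hT h4) (hD : w.ctx.head ⊢⁻ D.dia),
      w.child D hD ∈ goal hT h4 i ↔ w ∈ goal hT h4 j := by
  obtain ⟨_ | k, P⟩ := i
  exacts [⟨(0, (D.impl P).box), fun _ _ => .rfl⟩, ⟨(k, P), fun _ _ => .rfl⟩]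

theorem image_mem_polarClosure (h : IsChild w v) (hw : w ∈ polarClosure (goal hT h4) S) :
    v ∈ polarClosure (goal hT h4) {v' | ∃ w' ∈ S, IsChild w' v'} := by
  intro v' hle i hi
  obtain ⟨w', hle', D, hD⟩ := h.exists_of_le_right hle
  obtain ⟨j, hj⟩ := exists_goal (hT := hT) (h4 := h4) D i
  refine (hj w' hD).mpr (hw w' hle' j fun w'' ⟨hS, hle''⟩ => ?_)
  have hD' : w''.ctx.head ⊢⁻ D.dia := (Ctx.Le.head hle'').trans hD
  exact (hj w'' hD').mp (hi ⟨⟨w'', hS, .child ..⟩, .child .refl hle''⟩)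

theorem preimage_mem_polarClosure (h : IsChild w v) (hv : v ∈ polarClosure (goal hT h4) S) :
    w ∈ polarClosure (goal hT h4) {w' | ∃ v' ∈ S, IsChild w' v'} := by
  rintro w' hle ⟨k, P⟩ hi
  obtain ⟨v', hle', hchild⟩ := h.exists_of_le_left hle
  suffices v' ∈ goal hT h4 (k + 1, P) by cases hchild; exact this
  refine hv v' hle' (k + 1, P) fun v'' ⟨hS, hle''⟩ => ?_
  obtain ⟨w'', hle₃, hchild'⟩ := hchild.exists_of_le_right hle''
  have hw'' : w'' ∈ goal hT h4 (k, P) := hi ⟨⟨v'', hS, hchild'⟩, hle₃⟩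
  cases hchild'
  exact hw''

end IsChild

/-- The accessibility relation of the canonical model: the closure of `IsChild` under the frame
conditions selected by `hT` and `h4`. -/
inductive Accessible : Point hT h4 → Point hT h4 → Prop
  | of_isChild {w v : Point hT h4} (h : IsChild w v) : Accessible w v
  | refl (hT_eq : hT = true) (w : Point hT h4) : Accessible w w
  | trans (h4_eq : h4 = true) {u v w : Point hT h4} (huv : Accessible u v)
      (hvw : Accessible v w) : Accessible u w

namespace Accessible

theorem exists_of_le_left (h : Accessible w v) (hle : w ≤ w') : ∃ v' ≥ v, Accessible w' v' := by
  induction h generalizing w' with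
  | of_isChild h =>
    obtain ⟨v', hle', h'⟩ := h.exists_of_le_left hle
    exact ⟨v', hle', .of_isChild h'⟩
  | refl hT_eq => exact ⟨w', hle, .refl hT_eq w'⟩
  | trans h4_eq _ _ ih₁ ih₂ =>
    obtain ⟨u, hu, hacc₁⟩ := ih₁ hle
    obtain ⟨v, hv, hacc₂⟩ := ih₂ hu
    exact ⟨v, hv, .trans h4_eq hacc₁ hacc₂⟩

theorem exists_of_le_right (h : Accessible w v) (hle : v ≤ v') : ∃ w' ≥ w, Accessible w' v' := by
  induction h generalizing v' with
  | of_isChild h =>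
    obtain ⟨w', hle', h'⟩ := h.exists_of_le_right hle
    exact ⟨w', hle', .of_isChild h'⟩
  | refl hT_eq => exact ⟨v', hle, .refl hT_eq v'⟩
  | trans h4_eq _ _ ih₁ ih₂ =>
    obtain ⟨u, hu, hacc₂⟩ := ih₂ hle
    obtain ⟨w, hw, hacc₁⟩ := ih₁ hu
    exact ⟨w, hw, .trans h4_eq hacc₁ hacc₂⟩

theorem image_mem_polarClosure (h : Accessible w v) (hw : w ∈ polarClosure (goal hT h4) S) :
    v ∈ polarClosure (goal hT h4) {v' | ∃ w' ∈ S, Accessible w' v'} := by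
  induction h generalizing S with
  | of_isChild h =>
    refine polarClosure_mono ?_ (h.image_mem_polarClosure hw)
    exact fun _ ⟨w', hw', h'⟩ => ⟨w', hw', .of_isChild h'⟩
  | refl hT_eq =>
    refine polarClosure_mono ?_ hw
    exact fun w' hw' => ⟨w', hw', .refl hT_eq w'⟩
  | trans h4_eq _ _ ih₁ ih₂ =>
    refine polarClosure_mono ?_ (ih₂ (ih₁ hw))
    exact fun _ ⟨_, ⟨w', hw', hacc₁⟩, hacc₂⟩ => ⟨w', hw', .trans h4_eq hacc₁ hacc₂⟩

theorem preimage_mem_polarClosure (h : Accessible w v)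
    (hv : v ∈ polarClosure (goal hT h4) S) :
    w ∈ polarClosure (goal hT h4) {w' | ∃ v' ∈ S, Accessible w' v'} := by
  induction h generalizing S with
  | of_isChild h =>
    refine polarClosure_mono ?_ (h.preimage_mem_polarClosure hv)
    exact fun _ ⟨v', hv', h'⟩ => ⟨v', hv', .of_isChild h'⟩
  | refl hT_eq =>
    refine polarClosure_mono ?_ hv
    exact fun v' hv' => ⟨v', hv', .refl hT_eq v'⟩
  | trans h4_eq _ _ ih₁ ih₂ =>
    refine polarClosure_mono ?_ (ih₁ (ih₂ hv))
    exact fun _ ⟨_, ⟨v', hv', hacc₂⟩, hacc₁⟩ => ⟨v', hv', .trans h4_eq hacc₁ hacc₂⟩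

end Accessible

end Point

/-- The Beth model on the coherent contexts in which an atom is true where it is derivable. -/
def canonicalModel (hT h4 : Bool) : BethModel hT h4 (Point hT h4) (ℕ × MForm) where
  goal := Point.goal hT h4
  acc := Point.Accessible
  val n := Point.derivable hT h4 (.atom n)
  isUpperSet_val _ := Point.isUpperSet_derivable
  polarClosure_val_subset _ := Point.polarClosure_derivable_subset
  exists_acc_of_le_left := Point.Accessible.exists_of_le_left
  exists_acc_of_le_right := Point.Accessible.exists_of_le_right
  image_mem_polarClosure := Point.Accessible.image_mem_polarClosure
  preimage_mem_polarClosure := Point.Accessible.preimage_mem_polarClosure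
  acc_refl := Point.Accessible.refl
  acc_trans h4_eq := Point.Accessible.trans h4_eq

/-! ## Reflection and reification -/

namespace Point

variable {w v : Point hT h4} {X Y : MForm} {S : Set (Point hT h4)}

theorem assumable_bot_subset : assumable hT h4 .bot ⊆ polarClosure (goal hT h4) S :=
  fun _ hw w' hle _ _ => .bot_left w'.coherent ((Ctx.Le.head hle).trans hw)

theorem assumable_and_subset :
    assumable hT h4 (X.and Y) ⊆ assumable hT h4 X ∩ assumable hT h4 Y :=
  fun _ hw => ⟨NegEntails.trans hw .and_left, NegEntails.trans hw .and_right⟩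

theorem assumable_or_subset :
    assumable hT h4 (X.or Y) ⊆
      polarClosure (goal hT h4) (assumable hT h4 X ∪ assumable hT h4 Y) :=
  fun _ hw w' hle _ hi => .or_left w'.coherent ((Ctx.Le.head hle).trans hw)
    (hi ⟨.inl (w'.insert_mem_assumable X), w'.le_insert X⟩)
    (hi ⟨.inr (w'.insert_mem_assumable Y), w'.le_insert Y⟩)

theorem assumable_impl_inter_derivable_subset :
    assumable hT h4 (X.impl Y) ∩ derivable hT h4 X ⊆
      polarClosure (goal hT h4) (assumable hT h4 Y) :=
  fun _ ⟨hXY, hX⟩ w' hle _ hi => .mixed_left w'.coherent .mp ((Ctx.Le.head hle).trans hXY)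
    (isUpperSet_derivable hle hX) (hi ⟨w'.insert_mem_assumable Y, w'.le_insert Y⟩)

theorem IsChild.mem_polarClosure_assumable (h : IsChild w v)
    (hw : w ∈ polarClosure (goal hT h4) (assumable hT h4 X.box)) :
    v ∈ polarClosure (goal hT h4) (assumable hT h4 X) := by
  refine mem_polarClosure_bind (h.image_mem_polarClosure hw) ?_
  rintro _ - ⟨w, hX, hchild⟩ v' hle ⟨k, P⟩ hi
  obtain ⟨w', hle', D, hD⟩ := hchild.exists_of_le_right hle
  have hw' : w'.ctx.head ⊢⁻ X.box := (Ctx.Le.head hle').trans hX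
  exact .box_left (w'.child D hD).coherent hw'
    (hi ⟨insert_mem_assumable _ X, le_insert _ X⟩)

theorem Accessible.mem_polarClosure_assumable (h : Accessible w v)
    (hw : w ∈ polarClosure (goal hT h4) (assumable hT h4 X.box)) :
    v ∈ polarClosure (goal hT h4) (assumable hT h4 X) ∧
      (h4 = true → v ∈ polarClosure (goal hT h4) (assumable hT h4 X.box)) := by
  induction h with
  | of_isChild h =>
    exact ⟨h.mem_polarClosure_assumable hw, fun h4_eq => h.mem_polarClosure_assumable
      (polarClosure_mono (fun _ hX => NegEntails.trans hX (.box_box h4_eq)) hw)⟩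
  | refl hT_eq =>
    exact ⟨polarClosure_mono (fun _ hX => NegEntails.trans hX (.box_self hT_eq)) hw, fun _ => hw⟩
  | trans h4_eq _ _ ih₁ ih₂ => exact ih₂ ((ih₁ hw).2 h4_eq)

theorem exists_child_mem_assumable (hw : w ∈ assumable hT h4 X.dia) :
    ∃ v ∈ assumable hT h4 X, Accessible w v :=
  ⟨w.child X hw, NegEntails.refl, .of_isChild (.child X hw)⟩

theorem mem_derivable_impl (h : w.insert X ∈ derivable hT h4 Y) :
    w ∈ derivable hT h4 (X.impl Y) :=
  Ctx.Derives.of_insert h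

theorem mem_derivable_box (h : ∀ w' ≥ w, ∀ v, Accessible w' v → v ∈ derivable hT h4 X) :
    w ∈ derivable hT h4 X.box := by
  let w' := w.insert MForm.verum.dia
  have hw' : w'.ctx.head ⊢⁻ MForm.verum.dia := w.insert_mem_assumable _
  have hX : w' ∈ derivable hT h4 (MForm.verum.impl X).box :=
    h w' (w.le_insert _) _ (.of_isChild (.child _ hw'))
  exact Ctx.Derives.mono (Ctx.Derives.of_insert hX) .of_verum_dia_impl_box

theorem Accessible.mem_derivable_dia (h : Accessible w v) (hv : v ∈ derivable hT h4 X) :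
    w ∈ derivable hT h4 X.dia := by
  induction h generalizing X with
  | of_isChild h =>
    obtain ⟨D, hD⟩ := h
    exact Ctx.Derives.cut (Ctx.Derives.mono (P := (D.impl X).box) hv .k2) hD
  | refl hT_eq => exact Ctx.Derives.mono hv (.self_dia hT_eq)
  | trans h4_eq _ _ ih₁ ih₂ => exact (ih₁ (ih₂ hv)).mono (.dia_dia h4_eq)

theorem assumable_subset_interp_subset_derivable (X : MForm) :
    assumable hT h4 X ⊆ (canonicalModel hT h4).interp X ∧
      (canonicalModel hT h4).interp X ⊆ derivable hT h4 X := by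
  have closed := (canonicalModel hT h4).polarClosure_interp_subset
  have derives_of_mem {X : MForm} {S} (hS : S ⊆ derivable hT h4 X) :
      polarClosure (goal hT h4) S ⊆ derivable hT h4 X :=
    (polarClosure_mono hS).trans polarClosure_derivable_subset
  induction X with
  | bot => exact ⟨assumable_bot_subset, derives_of_mem (Set.empty_subset _)⟩
  | atom n =>
    exact ⟨fun _ hw => Ctx.Derives.cut (.of_realisable .atom_impl_self) hw, subset_rfl⟩
  | and X Y ihX ihY =>
    exact ⟨assumable_and_subset.trans (Set.inter_subset_inter ihX.1 ihY.1),
      fun _ h => Ctx.Derives.mono₂ (ihX.2 h.1) (ihY.2 h.2) .and_intro⟩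
  | or X Y ihX ihY =>
    exact ⟨assumable_or_subset.trans (polarClosure_mono (Set.union_subset_union ihX.1 ihY.1)),
      derives_of_mem (Set.union_subset (fun _ h => Ctx.Derives.mono (ihX.2 h) .or_inl)
        fun _ h => Ctx.Derives.mono (ihY.2 h) .or_inr)⟩
  | impl X Y ihX ihY =>
    exact ⟨fun _ hw w' hle hX => closed Y (polarClosure_mono ihY.1
        (assumable_impl_inter_derivable_subset ⟨isUpperSet_assumable hle hw, ihX.2 hX⟩)),
      fun w h => mem_derivable_impl
        (ihY.2 (h _ (w.le_insert X) (ihX.1 (w.insert_mem_assumable X))))⟩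
  | box X ih =>
    exact ⟨fun _ hw w' hle v hacc => closed X (polarClosure_mono ih.1
        (hacc.mem_polarClosure_assumable
          (subset_polarClosure isUpperSet_assumable (isUpperSet_assumable hle hw))).1),
      fun _ h => mem_derivable_box fun w' hle v hacc => ih.2 (h w' hle v hacc)⟩
  | dia X ih =>
    refine ⟨fun w hw => ?_,
      derives_of_mem fun _ ⟨v, hv, hacc⟩ => Accessible.mem_derivable_dia hacc (ih.2 hv)⟩
    obtain ⟨v, hv, hacc⟩ := exists_child_mem_assumable hw
    exact (canonicalModel hT h4).mem_interp_dia_of_acc hacc (ih.1 hv)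

end Point

theorem realisable_of_mThm {X : MForm} (h : MThm hT h4 X) : Realisable hT h4 X := by
  let root : Point hT h4 := ⟨.root .verum, trivial⟩
  have hX : root ∈ Point.derivable hT h4 X :=
    (Point.assumable_subset_interp_subset_derivable X).2
      ((canonicalModel hT h4).mem_interp_of_mThm h root)
  exact Realisable.mono hX .of_verum_impl

theorem realisation_theorem_general {A : MForm} (h : MThm hT h4 A) (u : Choice false A) :
    ∃ r : MForm → JForm, Function.RightInverse r forget ∧
      (∃ e : Choice true A, r A = realise true A u e) ∧ JThm hT h4 (r A) := by
  obtain ⟨e, he⟩ := realisable_of_mThm h u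
  obtain ⟨r, hr, hrA⟩ := exists_rightInverse_forget_apply_eq (realise true A u e)
  rw [forget_realise] at hrA
  exact ⟨r, hr, ⟨e, hrA⟩, by rwa [hrA]⟩

end Development

/-- Realisation Theorem: if A is a theorem of L ∈ {IK, IKt, IK4, IS4}
then there is a realisation r (with (B^r)° = B for all B) such that A^r is a theorem
of the corresponding justification logic JL. -/
theorem realisation_theorem (hT h4 : Bool) (A : MForm) (h : MThm hT h4 A) :
    ∃ r : MForm → JForm, (∀ B : MForm, forget (r B) = B) ∧ JThm hT h4 (r A) := by
  obtain ⟨r, hr, -, hrA⟩ := realisation_theorem_general h (Classical.arbitrary _)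
  exact ⟨r, hr, hrA⟩

end JIKPaper
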